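/- Let k and n be positive integers and let Ω ⊆ ℝ^k be a bounded convex open set. Let f : Ω → ℝ^{2n+1} be integrable and admit an integrable weak derivative Df : Ω → L(ℝ^k, ℝ^{2n+1}) (i.e. for every smooth compactly supported φ : Ω → ℝ and every i ∈ {1,…,k}, ∫_Ω f(x) ∂φ/∂x_i(x) dx = −∫_Ω Df(x)(e_i) φ(x) dx). Assume that for Lebesgue-almost every x ∈ Ω the image of Df(x) is contained in ker α(f(x)). Then for every ε > 0 there exists a measurable set E_ε ⊆ Ω with Lebesgue measure of Ω \ E_ε less than ε such that the restriction f|_{E_ε} is Lipschitz as a map from E_ε (Euclidean metric) to (ℝ^{2n+1}, d_K). -/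

import Mathlib

open MeasureTheory Metric Set
open scoped ENNReal NNReal

noncomputable section

abbrev Heis (n : ℕ) := EuclideanSpace ℝ (Fin (2*n+1))
abbrev Horiz (n : ℕ) := EuclideanSpace ℝ (Fin (2*n))

def xIdx (n : ℕ) (j : Fin n) : Fin (2*n+1) := ⟨2*j.1, by have := j.2; omega⟩
def yIdx (n : ℕ) (j : Fin n) : Fin (2*n+1) := ⟨2*j.1+1, by have := j.2; omega⟩
def tIdx (n : ℕ) : Fin (2*n+1) := ⟨2*n, by omega⟩
def xIdx2 (n : ℕ) (j : Fin n) : Fin (2*n) := ⟨2*j.1, by have := j.2; omega⟩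
def yIdx2 (n : ℕ) (j : Fin n) : Fin (2*n) := ⟨2*j.1+1, by have := j.2; omega⟩

/-- The Korányi distance on the Heisenberg group `ℍ^n = ℝ^{2n+1}`. -/
def dK (n : ℕ) (p q : Heis n) : ℝ :=
  ((∑ j : Fin n, ((p (xIdx n j) - q (xIdx n j))^2 + (p (yIdx n j) - q (yIdx n j))^2))^2
    + (p (tIdx n) - q (tIdx n)
        + 2 * ∑ j : Fin n, (q (xIdx n j) * p (yIdx n j) - p (xIdx n j) * q (yIdx n j)))^2)
    ^ ((1:ℝ)/4)

/-- The kernel of the standard contact form `α = dt + 2∑ (x_j dy_j − y_j dx_j)` at `p`. -/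
def kerAlpha (n : ℕ) (p : Heis n) : Set (Heis n) :=
  {v | v (tIdx n)
    + 2 * ∑ j : Fin n, (p (xIdx n j) * v (yIdx n j) - p (yIdx n j) * v (xIdx n j)) = 0}

/-- The standard symplectic form on `ℝ^{2n}`. -/
def omegaF (n : ℕ) (v w : Horiz n) : ℝ :=
  ∑ j : Fin n, (v (xIdx2 n j) * w (yIdx2 n j) - v (yIdx2 n j) * w (xIdx2 n j))

/-- The projection `π : ℝ^{2n+1} → ℝ^{2n}` forgetting the `t`-coordinate. -/
def piH (n : ℕ) (p : Heis n) : Horiz n :=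
  (EuclideanSpace.equiv (Fin (2*n)) ℝ).symm (fun i => p ⟨i.1, by have := i.2; omega⟩)

/-- Diameter of a set with respect to the Korányi distance, as an extended real. -/
def kDiam (n : ℕ) (U : Set (Heis n)) : ℝ≥0∞ :=
  ⨆ p ∈ U, ⨆ q ∈ U, ENNReal.ofReal (dK n p q)

/-- `S` is null for the `k`-dimensional Hausdorff measure built from the Korányi
distance: its `k`-dimensional Hausdorff content is arbitrarily small. -/
def IsHausdorffNullK (n k : ℕ) (S : Set (Heis n)) : Prop :=
  ∀ ε : ℝ≥0∞, 0 < ε → ∃ U : ℕ → Set (Heis n),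
    (S ⊆ ⋃ i, U i) ∧ ∑' i, (kDiam n (U i)) ^ k < ε

/-- `f` is Lipschitz on `E` as a map into `(ℝ^{2n+1}, d_K)`. -/
def LipschitzOnK (n : ℕ) {k : ℕ} (f : EuclideanSpace ℝ (Fin k) → Heis n)
    (E : Set (EuclideanSpace ℝ (Fin k))) : Prop :=
  ∃ L : ℝ, 0 ≤ L ∧ ∀ x ∈ E, ∀ y ∈ E, dK n (f x) (f y) ≤ L * dist x y

end
/-- `Df` is the weak (distributional) derivative of `f` on `Ω`: integration by parts
against smooth compactly supported test functions holds in every coordinate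
direction. -/
def IsWeakFDerivOn {k m : ℕ} (Ω : Set (EuclideanSpace ℝ (Fin k)))
    (f : EuclideanSpace ℝ (Fin k) → EuclideanSpace ℝ (Fin m))
    (Df : EuclideanSpace ℝ (Fin k) → (EuclideanSpace ℝ (Fin k) →L[ℝ] EuclideanSpace ℝ (Fin m))) :
    Prop :=
  ∀ φ : EuclideanSpace ℝ (Fin k) → ℝ, ContDiff ℝ (⊤ : ℕ∞) φ → HasCompactSupport φ →
    tsupport φ ⊆ Ω → ∀ i : Fin k,
      ∫ x in Ω, fderiv ℝ φ x (EuclideanSpace.single i (1:ℝ)) • f x =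
        - ∫ x in Ω, φ x • Df x (EuclideanSpace.single i (1:ℝ))

/-!
The mollifications of `f` converge to it in `L¹`, as do their derivatives; this yields the chain
rule `D(g ∘ f) = Dg(f) ∘ Df` for weak derivatives and `g` of class `C¹` and Lipschitz, and the
estimate that the mean of `|f(x + τ v) - f(x)|` over the unit ball is at most `B τ` at a Lebesgue
point `x` where the maximal function of `‖Df‖` is at most `B`. Comparing with the ball around the
midpoint gives `|f(x) - f(y)| ≤ C B |x - y|` for two such points.

For the Korányi distance, apply this to `g ∘ f` with `g = d_K(·, f(y))`, regularized near its
singularity. By itself `d_K(·, p)` is not Lipschitz, but in a direction `v` horizontal at `q` one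
has `α_p(v) = 2 ω(π(p - q), π(v))`, so its derivative at `q` along `v` is at most `2 |v|`. The
contact equation therefore gives `‖D(g ∘ f)‖ ≤ 2 ‖Df‖` with a constant independent of `y` and of the
regularization, and the estimate follows for points at distance at most `r`; for the remaining
pairs it suffices that `f` is bounded on the chosen set.
-/

section L1Convergence

open Filter Topology

variable {α ι E F : Type*} [MeasurableSpace α] {μ : Measure α} {l : Filter ι}
  [NormedAddCommGroup E] [NormedAddCommGroup F]

-- The integrand `‖u i‖ - ‖u i - f‖` is dominated by `‖f‖` and tends to it.
theorem tendsto_integral_norm_sub_of_integral_norm_le [l.IsCountablyGenerated] {u : ι → α → E}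
    {f : α → E} (hu : ∀ i, Integrable (u i) μ) (hf : Integrable f μ)
    (hle : ∀ i, ∫ a, ‖u i a‖ ∂μ ≤ ∫ a, ‖f a‖ ∂μ)
    (hlim : ∀ᵐ a ∂μ, Tendsto (fun i ↦ u i a) l (𝓝 (f a))) :
    Tendsto (fun i ↦ ∫ a, ‖u i a - f a‖ ∂μ) l (𝓝 0) := by
  have hdom : Tendsto (fun i ↦ ∫ a, (‖u i a‖ - ‖u i a - f a‖) ∂μ) l (𝓝 (∫ a, ‖f a‖ ∂μ)) := by
    refine tendsto_integral_filter_of_dominated_convergence (fun a ↦ ‖f a‖)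
      (.of_forall fun i ↦ ((hu i).norm.sub ((hu i).sub hf).norm).aestronglyMeasurable)
      (.of_forall fun i ↦ .of_forall fun a ↦ ?_) hf.norm ?_
    · simpa using abs_norm_sub_norm_le (u i a) (u i a - f a)
    · filter_upwards [hlim] with a ha
      simpa using ha.norm.sub (ha.sub_const (f a)).norm
  have hsub : Tendsto (fun i ↦ ∫ a, ‖f a‖ ∂μ - ∫ a, (‖u i a‖ - ‖u i a - f a‖) ∂μ) l (𝓝 0) := by
    simpa using hdom.const_sub (∫ a, ‖f a‖ ∂μ)
  refine squeeze_zero (fun i ↦ integral_nonneg fun a ↦ norm_nonneg _) (fun i ↦ ?_) hsub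
  rw [integral_sub (hu i).norm (by exact ((hu i).sub hf).norm)]
  linarith [hle i]

theorem integrable_comp_of_lipschitzWith {g : E → F} {C : ℝ≥0} (hg : LipschitzWith C g)
    (hg0 : g 0 = 0) {f : α → E} (hf : Integrable f μ) : Integrable (g ∘ f) μ :=
  memLp_one_iff_integrable.1 (hg.comp_memLp hg0 (memLp_one_iff_integrable.2 hf))

theorem tendsto_integral_norm_comp_sub_of_lipschitzWith {g : E → F} {C : ℝ≥0}
    (hg : LipschitzWith C g) {u : ι → α → E} {f : α → E}
    (hdiff : ∀ i, Integrable (fun a ↦ u i a - f a) μ)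
    (huf : Tendsto (fun i ↦ ∫ a, ‖u i a - f a‖ ∂μ) l (𝓝 0)) :
    Tendsto (fun i ↦ ∫ a, ‖g (u i a) - g (f a)‖ ∂μ) l (𝓝 0) := by
  refine squeeze_zero (fun i ↦ integral_nonneg fun a ↦ norm_nonneg _) (fun i ↦ ?_)
    (by simpa using huf.const_mul (C : ℝ))
  rw [← integral_const_mul]
  exact integral_mono_of_nonneg (.of_forall fun a ↦ norm_nonneg _) ((hdiff i).norm.const_mul _)
    (.of_forall fun a ↦ hg.norm_sub_le _ _)

variable [NormedSpace ℝ E] [NormedSpace ℝ F]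

theorem integrable_clm_apply {A : α → E →L[ℝ] F} {C : ℝ} (hA : AEStronglyMeasurable A μ)
    (hC : ∀ a, ‖A a‖ ≤ C) {f : α → E} (hf : Integrable f μ) :
    Integrable (fun a ↦ A a (f a)) μ :=
  (hf.norm.const_mul C).mono'
    ((ContinuousLinearMap.id ℝ (E →L[ℝ] F)).aestronglyMeasurable_comp₂ hA hf.1)
    (.of_forall fun a ↦ (A a).le_of_opNorm_le (hC a) (f a))

theorem tendsto_integral_norm_clm_sub_apply [l.IsCountablyGenerated] {A : ι → α → E →L[ℝ] F}
    {B : α → E →L[ℝ] F} {C : ℝ} (hA : ∀ i, AEStronglyMeasurable (A i) μ)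
    (hB : AEStronglyMeasurable B μ) (hAC : ∀ i a, ‖A i a‖ ≤ C) (hBC : ∀ a, ‖B a‖ ≤ C)
    (hAB : ∀ᵐ a ∂μ, Tendsto (fun i ↦ A i a) l (𝓝 (B a))) {f : α → E} (hf : Integrable f μ) :
    Tendsto (fun i ↦ ∫ a, ‖(A i a - B a) (f a)‖ ∂μ) l (𝓝 0) := by
  have hsub i a : ‖A i a - B a‖ ≤ C + C := norm_sub_le_of_le (hAC i a) (hBC a)
  rw [← integral_zero α ℝ (μ := μ)]
  refine tendsto_integral_filter_of_dominated_convergence (fun a ↦ (C + C) * ‖f a‖)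
    (.of_forall fun i ↦ (integrable_clm_apply ((hA i).sub hB) (hsub i) hf).1.norm)
    (.of_forall fun i ↦ .of_forall fun a ↦ ?_) (hf.norm.const_mul _) ?_
  · rw [norm_norm]
    exact ContinuousLinearMap.le_of_opNorm_le _ (hsub i a) _
  · filter_upwards [hAB] with a ha
    have happly := (ContinuousLinearMap.apply ℝ F (f a)).continuous.continuousAt.tendsto.comp
      (ha.sub_const (B a))
    simpa using happly.norm

theorem tendsto_integral_norm_clm_apply_sub [l.IsCountablyGenerated] {A : ι → α → E →L[ℝ] F}
    {B : α → E →L[ℝ] F} {C : ℝ} (hA : ∀ i, AEStronglyMeasurable (A i) μ)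
    (hB : AEStronglyMeasurable B μ) (hAC : ∀ i a, ‖A i a‖ ≤ C) (hBC : ∀ a, ‖B a‖ ≤ C)
    (hAB : ∀ᵐ a ∂μ, Tendsto (fun i ↦ A i a) l (𝓝 (B a))) {u : ι → α → E} {f : α → E}
    (hu : ∀ i, Integrable (u i) μ) (hf : Integrable f μ)
    (huf : Tendsto (fun i ↦ ∫ a, ‖u i a - f a‖ ∂μ) l (𝓝 0)) :
    Tendsto (fun i ↦ ∫ a, ‖A i a (u i a) - B a (f a)‖ ∂μ) l (𝓝 0) := by
  have hlim := (huf.const_mul C).add (tendsto_integral_norm_clm_sub_apply hA hB hAC hBC hAB hf)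
  rw [mul_zero, add_zero] at hlim
  refine squeeze_zero (fun i ↦ integral_nonneg fun a ↦ norm_nonneg _) (fun i ↦ ?_) hlim
  have hdiff : Integrable (fun a ↦ C * ‖u i a - f a‖) μ := ((hu i).sub hf).norm.const_mul C
  have hABf : Integrable (fun a ↦ ‖(A i a - B a) (f a)‖) μ :=
    (integrable_clm_apply ((hA i).sub hB) (fun a ↦ norm_sub_le_of_le (hAC i a) (hBC a)) hf).norm
  rw [← integral_const_mul, ← integral_add hdiff hABf]
  refine integral_mono ((integrable_clm_apply (hA i) (hAC i) (hu i)).sub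
    (integrable_clm_apply hB hBC hf)).norm (hdiff.add hABf) fun a ↦ ?_
  calc ‖A i a (u i a) - B a (f a)‖ = ‖A i a (u i a - f a) + (A i a - B a) (f a)‖ := by simp
    _ ≤ C * ‖u i a - f a‖ + ‖(A i a - B a) (f a)‖ :=
      norm_add_le_of_le ((A i a).le_of_opNorm_le (hAC i a) _) le_rfl

theorem tendsto_integral_smul_of_tendsto_integral_norm_sub {c : α → ℝ} {M : ℝ}
    (hc : AEStronglyMeasurable c μ) (hM : ∀ a, ‖c a‖ ≤ M) {u : ι → α → E} {f : α → E}
    (hu : ∀ i, Integrable (u i) μ) (hf : Integrable f μ)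
    (huf : Tendsto (fun i ↦ ∫ a, ‖u i a - f a‖ ∂μ) l (𝓝 0)) :
    Tendsto (fun i ↦ ∫ a, c a • u i a ∂μ) l (𝓝 (∫ a, c a • f a ∂μ)) := by
  have hsmul {w : α → E} (hw : Integrable w μ) : Integrable (fun a ↦ c a • w a) μ :=
    hw.bdd_smul M hc (.of_forall hM)
  rw [tendsto_iff_norm_sub_tendsto_zero]
  refine squeeze_zero (fun i ↦ norm_nonneg _) (fun i ↦ ?_) (by simpa using huf.const_mul M)
  rw [← integral_sub (hsmul (hu i)) (hsmul hf), ← integral_const_mul]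
  refine norm_integral_le_of_norm_le (((hu i).sub hf).norm.const_mul M) (.of_forall fun a ↦ ?_)
  rw [← smul_sub, norm_smul]
  exact mul_le_mul_of_nonneg_right (hM a) (norm_nonneg _)

end L1Convergence

section Mollification

open Filter Topology ContinuousLinearMap
open scoped Convolution ContDiff

/-- A standard sequence of bump functions at the origin with radii tending to zero; the ratio of
the outer to the inner radius is constant, as the Lebesgue differentiation theorem requires. -/
noncomputable def mollifier (V : Type*) [NormedAddCommGroup V] (j : ℕ) : ContDiffBump (0 : V) where
  rIn := 1 / (j + 1)
  rOut := 2 / (j + 1)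
  rIn_pos := by positivity
  rIn_lt_rOut := by gcongr; norm_num

theorem tendsto_mollifier_rOut (V : Type*) [NormedAddCommGroup V] :
    Tendsto (fun j ↦ (mollifier V j).rOut) atTop (𝓝 0) :=
  tendsto_const_div_atTop_nhds_zero_nat 2 |>.comp (tendsto_add_atTop_nat 1) |>.congr
    fun j ↦ by simp [mollifier]

variable {V W : Type*} [NormedAddCommGroup V] [NormedSpace ℝ V] [FiniteDimensional ℝ V]
  [MeasurableSpace V] [NormedAddCommGroup W] [NormedSpace ℝ W]

/-- The `j`-th mollification of `f`: its convolution with the normalised `j`-th mollifier. -/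
noncomputable def mollify (μ : Measure V) (j : ℕ) (f : V → W) : V → W :=
  (mollifier V j).normed μ ⋆[lsmul ℝ ℝ, μ] f

variable [BorelSpace V] {μ : Measure V} [μ.IsAddHaarMeasure] {f : V → W}

theorem integrable_mollify (hf : Integrable f μ) (j : ℕ) : Integrable (mollify μ j f) μ :=
  (mollifier V j).integrable_normed.integrable_convolution _ hf

theorem contDiff_mollify (hf : LocallyIntegrable f μ) (j : ℕ) : ContDiff ℝ ∞ (mollify μ j f) :=
  (mollifier V j).hasCompactSupport_normed.contDiff_convolution_left _
    (mollifier V j).contDiff_normed hf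

theorem integral_norm_mollify_le (hf : Integrable f μ) (j : ℕ) :
    ∫ x, ‖mollify μ j f x‖ ∂μ ≤ ∫ x, ‖f x‖ ∂μ := by
  have hρ : Integrable ((mollifier V j).normed μ) μ := (mollifier V j).integrable_normed
  calc ∫ x, ‖mollify μ j f x‖ ∂μ
      ≤ ∫ x, ((mollifier V j).normed μ ⋆[lsmul ℝ ℝ, μ] fun y ↦ ‖f y‖) x ∂μ := by
        refine integral_mono (integrable_mollify hf j).norm
          (hρ.integrable_convolution _ hf.norm) fun x ↦ ?_
        refine (norm_integral_le_integral_norm _).trans_eq <|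
          integral_congr_ae (.of_forall fun y ↦ ?_)
        simp [norm_smul, abs_of_nonneg ((mollifier V j).nonneg_normed y)]
    _ = ∫ x, ‖f x‖ ∂μ := by
        rw [integral_convolution (lsmul ℝ ℝ) hρ hf.norm, ContDiffBump.integral_normed, lsmul_apply,
          one_smul]

variable [CompleteSpace W]

theorem ae_tendsto_mollify (hf : LocallyIntegrable f μ) :
    ∀ᵐ x ∂μ, Tendsto (fun j ↦ mollify μ j f x) atTop (𝓝 (f x)) :=
  ContDiffBump.ae_convolution_tendsto_right_of_locallyIntegrable (K := 2)
    (tendsto_mollifier_rOut V) (.of_forall fun j ↦ by simp [mollifier, div_eq_mul_inv]) hf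

theorem tendsto_integral_norm_mollify_sub (hf : Integrable f μ) :
    Tendsto (fun j ↦ ∫ x, ‖mollify μ j f x - f x‖ ∂μ) atTop (𝓝 0) :=
  tendsto_integral_norm_sub_of_integral_norm_le (integrable_mollify hf) hf
    (integral_norm_mollify_le hf) (ae_tendsto_mollify hf.locallyIntegrable)

end Mollification

section WeakDerivative

open Filter Topology ContinuousLinearMap
open scoped Convolution ContDiff

theorem norm_compL_fderiv_le_of_lipschitzWith (V : Type*) [NormedAddCommGroup V] [NormedSpace ℝ V]
    {W X : Type*} [NormedAddCommGroup W] [NormedSpace ℝ W] [NormedAddCommGroup X] [NormedSpace ℝ X]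
    {g : W → X} {C : ℝ≥0} (hg : LipschitzWith C g) (w : W) : ‖compL ℝ V W X (fderiv ℝ g w)‖ ≤ C :=
  opNorm_le_bound _ C.2 fun T ↦ (opNorm_comp_le (fderiv ℝ g w) T).trans
    (mul_le_mul_of_nonneg_right (norm_fderiv_le_of_lipschitz ℝ hg) (norm_nonneg T))

theorem smul_indicator_of_tsupport_subset {Y W : Type*} [TopologicalSpace Y] [AddCommGroup W]
    [Module ℝ W] {s : Set Y} {c : Y → ℝ} (hc : tsupport c ⊆ s) (f : Y → W) (x : Y) :
    c x • s.indicator f x = c x • f x := by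
  by_cases hx : x ∈ s
  · rw [indicator_of_mem hx]
  · simp [image_eq_zero_of_notMem_tsupport (mt (@hc x) hx)]

variable {V W X : Type*} [NormedAddCommGroup V] [NormedSpace ℝ V] [MeasurableSpace V]
  {μ : Measure V} [NormedAddCommGroup W] [NormedSpace ℝ W] [NormedAddCommGroup X] [NormedSpace ℝ X]
  {Ω : Set V} {f : V → W} {Df : V → V →L[ℝ] W}

/-- `Df` is the weak derivative of `f` on `Ω` with respect to `μ`. The integrals may be taken over
the whole space because the test functions are supported in `Ω`; only the values of `f` and `Df` on
`Ω` matter. -/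
def HasWeakFDerivOn (μ : Measure V) (Ω : Set V) (f : V → W) (Df : V → V →L[ℝ] W) : Prop :=
  ∀ φ : V → ℝ, ContDiff ℝ ∞ φ → HasCompactSupport φ → tsupport φ ⊆ Ω → ∀ v : V,
    ∫ x, fderiv ℝ φ x v • f x ∂μ = -∫ x, φ x • Df x v ∂μ

namespace HasWeakFDerivOn

theorem indicator (h : HasWeakFDerivOn μ Ω f Df) :
    HasWeakFDerivOn μ Ω (Ω.indicator f) (Ω.indicator Df) := by
  intro φ hφ hφc hφΩ v
  have hDf (x) : φ x • Ω.indicator Df x v = φ x • Df x v :=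
    congr($(smul_indicator_of_tsupport_subset hφΩ Df x) v)
  simp only [smul_indicator_of_tsupport_subset ((tsupport_fderiv_apply_subset ℝ v).trans hφΩ), hDf]
  exact h φ hφ hφc hφΩ v

variable [FiniteDimensional ℝ V] [BorelSpace V] [μ.IsAddHaarMeasure]

theorem fderiv_convolution (h : HasWeakFDerivOn μ Ω f Df) (hf : LocallyIntegrable f μ)
    (hDf : LocallyIntegrable Df μ) {ρ : V → ℝ} (hρ : ContDiff ℝ ∞ ρ) (hρc : HasCompactSupport ρ)
    {x : V} (hx : ∀ z ∈ tsupport ρ, x - z ∈ Ω) :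
    fderiv ℝ (ρ ⋆[lsmul ℝ ℝ, μ] f) x = (ρ ⋆[lsmul ℝ ℝ, μ] Df) x := by
  have hρx : ContDiff ℝ ∞ fun w ↦ ρ (x - w) := hρ.comp (contDiff_const.sub contDiff_id)
  have hρxc : HasCompactSupport fun w ↦ ρ (x - w) := hρc.comp_homeomorph (Homeomorph.subLeft x)
  have hρxΩ : tsupport (fun w ↦ ρ (x - w)) ⊆ Ω := by
    intro w hw
    rw [show (fun w ↦ ρ (x - w)) = ρ ∘ Homeomorph.subLeft x from rfl,
      tsupport_comp_eq_preimage] at hw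
    simpa using hx (x - w) hw
  have hfderiv (w v : V) : fderiv ℝ (fun w ↦ ρ (x - w)) w v = -fderiv ℝ ρ (x - w) v := by
    have hcomp : HasFDerivAt (fun w ↦ ρ (x - w)) _ w :=
      (hρ.differentiable (by simp) (x - w)).hasFDerivAt.comp w ((hasFDerivAt_id w).const_sub x)
    simp [hcomp.fderiv]
  have hconv_f := (hρc.fderiv ℝ).convolutionExists_left ((lsmul ℝ ℝ).precompL V)
    (hρ.continuous_fderiv (by simp)) hf x
  have hconv_Df := hρc.convolutionExists_left (lsmul ℝ ℝ) hρ.continuous hDf x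
  rw [(hρc.hasFDerivAt_convolution_left (lsmul ℝ ℝ) (hρ.of_le (by simp)) hf x).fderiv]
  ext v
  rw [convolution_eq_swap, convolution_eq_swap, integral_apply hconv_f.integrable_swap,
    integral_apply hconv_Df.integrable_swap]
  calc ∫ w, (lsmul ℝ ℝ).precompL V (fderiv ℝ ρ (x - w)) (f w) v ∂μ
      = -∫ w, fderiv ℝ (fun w ↦ ρ (x - w)) w v • f w ∂μ := by
        simp [hfderiv, integral_neg]
    _ = ∫ w, ρ (x - w) • Df w v ∂μ := by rw [h _ hρx hρxc hρxΩ v, neg_neg]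

theorem eventually_fderiv_mollify (h : HasWeakFDerivOn μ Ω f Df) (hf : LocallyIntegrable f μ)
    (hDf : LocallyIntegrable Df μ) {K : Set V} (hK : IsCompact K) (hΩ : IsOpen Ω) (hKΩ : K ⊆ Ω) :
    ∀ᶠ j in atTop, ∀ x ∈ K, fderiv ℝ (mollify μ j f) x = mollify μ j Df x := by
  obtain ⟨δ, hδ, hδΩ⟩ := hK.exists_cthickening_subset_open hΩ hKΩ
  filter_upwards [(tendsto_mollifier_rOut V).eventually_lt_const hδ] with j hj x hx
  refine h.fderiv_convolution hf hDf (mollifier V j).contDiff_normed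
    (mollifier V j).hasCompactSupport_normed fun z hz ↦ hδΩ ?_
  rw [ContDiffBump.tsupport_normed_eq, mem_closedBall_zero_iff] at hz
  exact mem_cthickening_of_dist_le _ x _ _ hx (by simpa using hz.trans hj.le)

end HasWeakFDerivOn

theorem integrable_fderiv_comp_clm {g : W → X} {C : ℝ≥0} (hg : ContDiff ℝ 1 g)
    (hgC : LipschitzWith C g) (hf : AEStronglyMeasurable f μ) (hDf : Integrable Df μ) :
    Integrable (fun x ↦ (fderiv ℝ g (f x)).comp (Df x)) μ :=
  integrable_clm_apply (A := fun x ↦ compL ℝ V W X (fderiv ℝ g (f x)))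
    (((compL ℝ V W X).continuous.comp (hg.continuous_fderiv one_ne_zero)).comp_aestronglyMeasurable
      hf) (fun x ↦ norm_compL_fderiv_le_of_lipschitzWith V hgC (f x)) hDf

variable [FiniteDimensional ℝ V] [BorelSpace V] [μ.IsAddHaarMeasure]

theorem integral_fderiv_smul_comp_eq {u : V → W} (hu : ContDiff ℝ 1 u) {g : W → X}
    (hg : ContDiff ℝ 1 g) {φ : V → ℝ} (hφ : ContDiff ℝ 1 φ) (hφc : HasCompactSupport φ) (v : V) :
    ∫ x, fderiv ℝ φ x v • g (u x) ∂μ = -∫ x, φ x • fderiv ℝ g (u x) (fderiv ℝ u x v) ∂μ := by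
  have hgu : ContDiff ℝ 1 (g ∘ u) := hg.comp hu
  have hdφ : Continuous fun x ↦ fderiv ℝ φ x v :=
    (hφ.continuous_fderiv one_ne_zero).clm_apply continuous_const
  have hdgu : Continuous fun x ↦ fderiv ℝ (g ∘ u) x v :=
    (hgu.continuous_fderiv one_ne_zero).clm_apply continuous_const
  have hparts := integral_smul_fderiv_eq_neg_fderiv_smul_of_integrable (μ := μ)
    ((hdφ.smul hgu.continuous).integrable_of_hasCompactSupport
      ((hφc.fderiv_apply ℝ v).smul_right))
    ((hφ.continuous.smul hdgu).integrable_of_hasCompactSupport hφc.smul_right)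
    ((hφ.continuous.smul hgu.continuous).integrable_of_hasCompactSupport hφc.smul_right)
    (fun x _ ↦ hφ.differentiable one_ne_zero x) (fun x _ ↦ hgu.differentiable one_ne_zero x)
  have hchain (x : V) : fderiv ℝ (g ∘ u) x v = fderiv ℝ g (u x) (fderiv ℝ u x v) := by
    rw [fderiv_comp x (hg.differentiable one_ne_zero _) (hu.differentiable one_ne_zero _),
      coe_comp, Function.comp_apply]
  simp only [hchain, Function.comp_apply] at hparts
  rw [hparts, neg_neg]

theorem tendsto_integral_norm_fderiv_comp_mollify_sub [CompleteSpace W] {g : W → X} {C : ℝ≥0}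
    (hg : ContDiff ℝ 1 g) (hgC : LipschitzWith C g) (hf : Integrable f μ) (hDf : Integrable Df μ) :
    Tendsto (fun j ↦ ∫ x, ‖(fderiv ℝ g (mollify μ j f x)).comp (mollify μ j Df x) -
      (fderiv ℝ g (f x)).comp (Df x)‖ ∂μ) atTop (𝓝 0) := by
  have hA : Continuous fun w ↦ compL ℝ V W X (fderiv ℝ g w) :=
    (compL ℝ V W X).continuous.comp (hg.continuous_fderiv one_ne_zero)
  refine tendsto_integral_norm_clm_apply_sub (A := fun j x ↦ compL ℝ V W X (fderiv ℝ g _))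
    (B := fun x ↦ compL ℝ V W X (fderiv ℝ g _))
    (fun j ↦ hA.comp_aestronglyMeasurable (integrable_mollify hf j).1)
    (hA.comp_aestronglyMeasurable hf.1)
    (fun j x ↦ norm_compL_fderiv_le_of_lipschitzWith V hgC _)
    (fun x ↦ norm_compL_fderiv_le_of_lipschitzWith V hgC _) ?_
    (integrable_mollify hDf) hDf (tendsto_integral_norm_mollify_sub hDf)
  filter_upwards [ae_tendsto_mollify hf.locallyIntegrable] with x hx
  exact (hA.tendsto _).comp hx

-- The identity holds for the mollifications of `f`, and both of its sides converge.
theorem HasWeakFDerivOn.comp [CompleteSpace W] (h : HasWeakFDerivOn μ Ω f Df) (hΩ : IsOpen Ω)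
    (hf : Integrable f μ) (hDf : Integrable Df μ) {g : W → X} {C : ℝ≥0} (hg : ContDiff ℝ 1 g)
    (hgC : LipschitzWith C g) (hg0 : g 0 = 0) :
    HasWeakFDerivOn μ Ω (g ∘ f) fun x ↦ (fderiv ℝ g (f x)).comp (Df x) := by
  intro φ hφ hφc hφΩ v
  have hdφ : Continuous fun x ↦ fderiv ℝ φ x v :=
    (hφ.continuous_fderiv (by simp)).clm_apply continuous_const
  obtain ⟨M, hM⟩ := hφc.exists_bound_of_continuous hφ.continuous
  obtain ⟨M', hM'⟩ := (hφc.fderiv_apply ℝ v).exists_bound_of_continuous hdφ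
  have hmoll (j : ℕ) : Integrable (mollify μ j f) μ := integrable_mollify hf j
  have hleft : Tendsto (fun j ↦ ∫ x, fderiv ℝ φ x v • g (mollify μ j f x) ∂μ) atTop
      (𝓝 (∫ x, fderiv ℝ φ x v • g (f x) ∂μ)) :=
    tendsto_integral_smul_of_tendsto_integral_norm_sub hdφ.aestronglyMeasurable hM'
      (fun j ↦ integrable_comp_of_lipschitzWith hgC hg0 (hmoll j))
      (integrable_comp_of_lipschitzWith hgC hg0 hf)
      (tendsto_integral_norm_comp_sub_of_lipschitzWith hgC (fun j ↦ (hmoll j).sub hf)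
        (tendsto_integral_norm_mollify_sub hf))
  have hright := tendsto_integral_smul_of_tendsto_integral_norm_sub
    hφ.continuous.aestronglyMeasurable hM
    (fun j ↦ integrable_fderiv_comp_clm hg hgC (hmoll j).1 (integrable_mollify hDf j))
    (integrable_fderiv_comp_clm hg hgC hf.1 hDf)
    (tendsto_integral_norm_fderiv_comp_mollify_sub hg hgC hf hDf)
  have happly {T : V → V →L[ℝ] X} (hT : Integrable T μ) :
      (∫ x, φ x • T x ∂μ) v = ∫ x, φ x • T x v ∂μ :=
    integral_apply (hT.bdd_smul M hφ.continuous.aestronglyMeasurable (.of_forall hM)) v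
  replace hright := ((apply ℝ X v).continuous.tendsto _).comp hright
  simp only [Function.comp_def, apply_apply] at hright
  rw [happly (integrable_fderiv_comp_clm hg hgC hf.1 hDf)] at hright
  refine tendsto_nhds_unique_of_eventuallyEq hleft hright.neg ?_
  filter_upwards [h.eventually_fderiv_mollify hf.locallyIntegrable hDf.locallyIntegrable hφc hΩ hφΩ]
    with j hj
  rw [happly (integrable_fderiv_comp_clm hg hgC (hmoll j).1 (integrable_mollify hDf j)),
    integral_fderiv_smul_comp_eq ((contDiff_mollify hf.locallyIntegrable j).of_le (by simp)) hg
      (hφ.of_le (by simp)) hφc v]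
  congr 2 with x
  by_cases hx : x ∈ tsupport φ
  · simp [hj x hx]
  · simp [image_eq_zero_of_notMem_tsupport hx]

theorem integral_clm_apply_eq_sum_smul_single {α : Type*} [MeasurableSpace α] {ν : Measure α}
    {k : ℕ} {T : α → EuclideanSpace ℝ (Fin k) →L[ℝ] W}
    (hT : ∀ i, Integrable (fun a ↦ T a (EuclideanSpace.single i 1)) ν)
    (v : EuclideanSpace ℝ (Fin k)) :
    ∫ a, T a v ∂ν = ∑ i, v i • ∫ a, T a (EuclideanSpace.single i 1) ∂ν := by
  have hv (a : α) : T a v = ∑ i, v i • T a (EuclideanSpace.single i 1) := by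
    conv_lhs => rw [← (EuclideanSpace.basisFun (Fin k) ℝ).sum_repr v]
    simp
  simp only [hv, ← integral_smul]
  exact integral_finsetSum _ fun i _ ↦ (hT i).smul (v i)

theorem IsWeakFDerivOn.hasWeakFDerivOn {k m : ℕ} {Ω : Set (EuclideanSpace ℝ (Fin k))}
    {f : EuclideanSpace ℝ (Fin k) → EuclideanSpace ℝ (Fin m)}
    {Df : EuclideanSpace ℝ (Fin k) → EuclideanSpace ℝ (Fin k) →L[ℝ] EuclideanSpace ℝ (Fin m)}
    (h : IsWeakFDerivOn Ω f Df) (hf : IntegrableOn f Ω) (hDf : IntegrableOn Df Ω) :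
    HasWeakFDerivOn volume Ω f Df := by
  intro φ hφ hφc hφΩ v
  have hint {c : EuclideanSpace ℝ (Fin k) → ℝ} (hc : Continuous c) (hcc : HasCompactSupport c)
      {g : EuclideanSpace ℝ (Fin k) → EuclideanSpace ℝ (Fin m)} (hg : IntegrableOn g Ω) :
      IntegrableOn (fun x ↦ c x • g x) Ω := by
    obtain ⟨M, hM⟩ := hcc.exists_bound_of_continuous hc
    exact hg.bdd_smul M hc.aestronglyMeasurable (.of_forall hM)
  have hsupp {c : EuclideanSpace ℝ (Fin k) → ℝ} (hc : tsupport c ⊆ Ω)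
      (g : EuclideanSpace ℝ (Fin k) → EuclideanSpace ℝ (Fin m)) :
      ∫ x, c x • g x = ∫ x in Ω, c x • g x :=
    (setIntegral_eq_integral_of_forall_compl_eq_zero fun x hx ↦ by
      simp [image_eq_zero_of_notMem_tsupport (mt (@hc x) hx)]).symm
  calc ∫ x, fderiv ℝ φ x v • f x
      = ∫ x in Ω, (fderiv ℝ φ x).smulRight (f x) v :=
        hsupp ((tsupport_fderiv_apply_subset ℝ v).trans hφΩ) f
    _ = ∑ i, v i • ∫ x in Ω, fderiv ℝ φ x (EuclideanSpace.single i 1) • f x :=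
        integral_clm_apply_eq_sum_smul_single (T := fun x ↦ (fderiv ℝ φ x).smulRight (f x))
          (fun i ↦ hint ((hφ.continuous_fderiv (by simp)).clm_apply continuous_const)
            (hφc.fderiv_apply ℝ _) hf) v
    _ = -∑ i, v i • ∫ x in Ω, φ x • Df x (EuclideanSpace.single i 1) := by
        simp [h φ hφ hφc hφΩ]
    _ = -∫ x in Ω, (φ x • Df x) v := by
        rw [integral_clm_apply_eq_sum_smul_single (T := fun x ↦ φ x • Df x) (fun i ↦
          hint hφ.continuous hφc (hDf.apply_continuousLinearMap _)) v]
        rfl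
    _ = -∫ x, φ x • Df x v := by rw [hsupp hφΩ fun x ↦ Df x v]; rfl

end WeakDerivative

section Poincare

open Filter Topology Module
open scoped ProbabilityTheory

section SetAverage

variable {Y E : Type*} [PseudoMetricSpace Y] [ProperSpace Y] [MeasurableSpace Y] {μ : Measure Y}
  [IsFiniteMeasureOnCompacts μ] [μ.IsOpenPosMeasure] [NormedAddCommGroup E]

theorem setAverage_closedBall_le_of_le {F : Y → ℝ} (hF : Integrable F μ) (hF0 : 0 ≤ F) (x : Y)
    {s τ : ℝ} (hs : 0 < s) (hsτ : s ≤ τ) :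
    ⨍ w in closedBall x τ, F w ∂μ ≤ (μ.real (closedBall x s))⁻¹ * ∫ w, F w ∂μ := by
  have hpos : 0 < μ.real (closedBall x s) :=
    ENNReal.toReal_pos (measure_closedBall_pos μ x hs).ne' measure_closedBall_lt_top.ne
  rw [setAverage_eq, smul_eq_mul]
  gcongr
  · exact integral_nonneg hF0
  · exact measure_closedBall_lt_top.ne
  · exact .of_forall hF0
  · exact Measure.restrict_le_self

theorem setAverage_closedBall_norm_le_add {F G : Y → E} (hF : Integrable F μ) (hG : Integrable G μ)
    (x : Y) {s τ : ℝ} (hs : 0 < s) (hsτ : s ≤ τ) :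
    ⨍ w in closedBall x τ, ‖F w‖ ∂μ ≤ ⨍ w in closedBall x τ, ‖G w‖ ∂μ +
      (μ.real (closedBall x s))⁻¹ * ∫ w, ‖F w - G w‖ ∂μ := by
  have hsub : Integrable (fun w ↦ ‖F w - G w‖) μ := (hF.sub hG).norm
  calc ⨍ w in closedBall x τ, ‖F w‖ ∂μ
      ≤ ⨍ w in closedBall x τ, (‖G w‖ + ‖F w - G w‖) ∂μ := by
        simp only [setAverage_eq, smul_eq_mul]
        exact mul_le_mul_of_nonneg_left (setIntegral_mono hF.norm.integrableOn
          (hG.norm.add hsub).integrableOn fun w ↦ norm_le_norm_add_norm_sub' _ _) (by positivity)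
    _ = ⨍ w in closedBall x τ, ‖G w‖ ∂μ + ⨍ w in closedBall x τ, ‖F w - G w‖ ∂μ := by
        simp only [setAverage_eq]
        rw [integral_add hG.norm.integrableOn hsub.integrableOn, smul_add]
    _ ≤ _ := by
        gcongr
        exact setAverage_closedBall_le_of_le hsub (fun w ↦ norm_nonneg _) x hs hsτ

end SetAverage

variable {V W : Type*} [NormedAddCommGroup V] [NormedSpace ℝ V] [NormedAddCommGroup W]
  [NormedSpace ℝ W]

theorem norm_sub_le_integral_norm_fderiv_add_smul [CompleteSpace W] {u : V → W}
    (hu : ContDiff ℝ 1 u) (x : V) {v : V} (hv : v ∈ closedBall 0 1) {s r : ℝ} (hsr : s ≤ r) :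
    ‖u (x + r • v) - u (x + s • v)‖ ≤ ∫ τ in s..r, ‖fderiv ℝ u (x + τ • v)‖ := by
  have hderiv (τ : ℝ) : HasDerivAt (fun τ : ℝ ↦ u (x + τ • v)) (fderiv ℝ u (x + τ • v) v) τ := by
    have hline : HasDerivAt (fun τ : ℝ ↦ x + τ • v) v τ := by
      simpa using ((hasDerivAt_id τ).smul_const v).const_add x
    exact (hu.differentiable one_ne_zero _).hasFDerivAt.comp_hasDerivAt τ hline
  have hcont : Continuous fun τ : ℝ ↦ fderiv ℝ u (x + τ • v) :=
    (hu.continuous_fderiv one_ne_zero).comp (by fun_prop)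
  rw [← intervalIntegral.integral_eq_sub_of_hasDerivAt (fun τ _ ↦ hderiv τ)
    ((hcont.clm_apply continuous_const).intervalIntegrable s r)]
  refine intervalIntegral.norm_integral_le_of_norm_le hsr (.of_forall fun τ _ ↦ ?_)
    (hcont.norm.intervalIntegrable s r)
  exact (fderiv ℝ u _).unit_le_opNorm v (mem_closedBall_zero_iff.1 hv)

theorem add_smul_mem_closedBall (x : V) {v : V} (hv : v ∈ closedBall 0 1) {τ r : ℝ} (hτ : 0 ≤ τ)
    (hτr : τ ≤ r) : x + τ • v ∈ closedBall x r := by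
  rw [mem_closedBall, dist_self_add_left, norm_smul, Real.norm_of_nonneg hτ]
  exact (mul_le_of_le_one_right hτ (mem_closedBall_zero_iff.1 hv)).trans hτr

variable [FiniteDimensional ℝ V] [MeasurableSpace V] [BorelSpace V]

theorem integral_norm_dilate_sub_le [CompleteSpace W] {ν : Measure V} [IsFiniteMeasure ν]
    (hν : ∀ᵐ v ∂ν, v ∈ closedBall 0 1) {u : V → W} (hu : ContDiff ℝ 1 u) (x : V) {s r A : ℝ}
    (hs : 0 ≤ s) (hsr : s ≤ r) (hA : ∀ τ ∈ Icc s r, ∫ v, ‖fderiv ℝ u (x + τ • v)‖ ∂ν ≤ A) :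
    ∫ v, ‖u (x + r • v) - u (x + s • v)‖ ∂ν ≤ A * (r - s) := by
  have : IsFiniteMeasure (volume.restrict (uIoc s r)) := ⟨by simp [uIoc]⟩
  have hcont : Continuous fun q : ℝ × V ↦ fderiv ℝ u (x + q.1 • q.2) :=
    (hu.continuous_fderiv one_ne_zero).comp (by fun_prop)
  obtain ⟨C, hC⟩ := (isCompact_closedBall x r).exists_bound_of_continuousOn
    (hu.continuous_fderiv one_ne_zero).continuousOn
  have hint : Integrable (fun q : ℝ × V ↦ ‖fderiv ℝ u (x + q.1 • q.2)‖)
      ((volume.restrict (uIoc s r)).prod ν) := by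
    refine (integrable_const C).mono' hcont.norm.aestronglyMeasurable ?_
    filter_upwards [Measure.quasiMeasurePreserving_fst.ae (ae_restrict_mem measurableSet_uIoc),
      Measure.quasiMeasurePreserving_snd.ae hν] with q hq₁ hq₂
    rw [uIoc_of_le hsr] at hq₁
    rw [norm_norm]
    exact hC _ (add_smul_mem_closedBall x hq₂ (hs.trans hq₁.1.le) hq₁.2)
  calc ∫ v, ‖u (x + r • v) - u (x + s • v)‖ ∂ν
      ≤ ∫ v, (∫ τ in s..r, ‖fderiv ℝ u (x + τ • v)‖) ∂ν := by
        refine integral_mono_of_nonneg (.of_forall fun v ↦ norm_nonneg _) ?_ ?_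
        · simpa only [intervalIntegral.integral_of_le hsr, uIoc_of_le hsr]
            using hint.integral_prod_right
        · filter_upwards [hν] with v hv
          exact norm_sub_le_integral_norm_fderiv_add_smul hu x hv hsr
    _ = ∫ τ in s..r, (∫ v, ‖fderiv ℝ u (x + τ • v)‖ ∂ν) :=
        (intervalIntegral_integral_swap hint).symm
    _ ≤ ∫ _ in s..r, A := by
        refine intervalIntegral.integral_mono_on hsr ?_ intervalIntegrable_const hA
        rw [intervalIntegrable_iff]
        exact hint.integral_prod_left
    _ = A * (r - s) := by rw [intervalIntegral.integral_const, smul_eq_mul, mul_comm]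

variable {μ : Measure V} [μ.IsAddHaarMeasure]

instance : IsProbabilityMeasure μ[|closedBall (0 : V) 1] :=
  ProbabilityTheory.cond_isProbabilityMeasure_of_finite (measure_closedBall_pos μ 0 one_pos).ne'
    measure_closedBall_lt_top.ne

theorem setIntegral_closedBall_comp_add_smul (F : V → W) (x : V) {τ : ℝ} (hτ : 0 < τ) :
    ∫ v in closedBall 0 1, F (x + τ • v) ∂μ =
      (τ ^ finrank ℝ V)⁻¹ • ∫ w in closedBall x τ, F w ∂μ := by
  rw [Measure.setIntegral_comp_smul_of_pos μ (fun w ↦ F (x + w)) _ hτ,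
    smul_unitClosedBall_of_nonneg hτ.le, ← (measurePreserving_add_left μ x).setIntegral_preimage_emb
      (measurableEmbedding_addLeft x) F (closedBall x τ), preimage_add_closedBall, sub_self]

theorem integral_cond_closedBall_comp_add_smul (F : V → W) (x : V) {τ : ℝ} (hτ : 0 < τ) :
    ∫ v, F (x + τ • v) ∂μ[|closedBall 0 1] = ⨍ w in closedBall x τ, F w ∂μ := by
  rw [ProbabilityTheory.cond, ← setAverage_eq', setAverage_eq, setAverage_eq,
    setIntegral_closedBall_comp_add_smul F x hτ, smul_smul,
    Measure.addHaar_real_closedBall' μ x hτ.le, mul_inv_rev]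

theorem integrable_cond_closedBall_comp_add_smul {E : Type*} [NormedAddCommGroup E] {F : V → E}
    (hF : Integrable F μ) (x : V) {τ : ℝ} (hτ : 0 < τ) :
    Integrable (fun v ↦ F (x + τ • v)) μ[|closedBall 0 1] :=
  (((hF.comp_add_left x).comp_smul hτ.ne').integrableOn (s := closedBall 0 1)).smul_measure
    (ENNReal.inv_ne_top.2 (measure_closedBall_pos μ 0 one_pos).ne')

theorem integral_norm_dilate_sub_le_add {E : Type*} [NormedAddCommGroup E] {u w : V → E}
    (hu : Integrable u μ) (hw : Integrable w μ) (x : V) {s r : ℝ} (hs : 0 < s) (hsr : s ≤ r) :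
    ∫ v, ‖u (x + r • v) - u (x + s • v)‖ ∂μ[|closedBall 0 1] ≤
      ∫ v, ‖w (x + r • v) - w (x + s • v)‖ ∂μ[|closedBall 0 1] +
        2 * ((μ.real (closedBall x s))⁻¹ * ∫ y, ‖w y - u y‖ ∂μ) := by
  have hint {F G : V → E} (hF : Integrable F μ) (hG : Integrable G μ) {τ σ : ℝ} (hτ : s ≤ τ)
      (hσ : s ≤ σ) : Integrable (fun v ↦ ‖F (x + τ • v) - G (x + σ • v)‖) μ[|closedBall 0 1] :=
    ((integrable_cond_closedBall_comp_add_smul hF x (hs.trans_le hτ)).sub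
      (integrable_cond_closedBall_comp_add_smul hG x (hs.trans_le hσ))).norm
  have hsub {τ : ℝ} (hτ : s ≤ τ) :
      ∫ v, ‖w (x + τ • v) - u (x + τ • v)‖ ∂μ[|closedBall 0 1] ≤
        (μ.real (closedBall x s))⁻¹ * ∫ y, ‖w y - u y‖ ∂μ := by
    rw [integral_cond_closedBall_comp_add_smul (fun y ↦ ‖w y - u y‖) x (hs.trans_le hτ)]
    exact setAverage_closedBall_le_of_le (hw.sub hu).norm (fun y ↦ norm_nonneg _) x hs hτ
  have hww := hint hw hw hsr le_rfl
  have hwu_r := hint hw hu hsr hsr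
  have hwu_s := hint hw hu (le_refl s) le_rfl
  calc ∫ v, ‖u (x + r • v) - u (x + s • v)‖ ∂μ[|closedBall 0 1]
      ≤ ∫ v, (‖w (x + r • v) - w (x + s • v)‖ + (‖w (x + r • v) - u (x + r • v)‖ +
          ‖w (x + s • v) - u (x + s • v)‖)) ∂μ[|closedBall 0 1] := by
        refine integral_mono (hint hu hu hsr le_rfl) (hww.add (hwu_r.add hwu_s)) fun v ↦ ?_
        rw [norm_sub_rev (w (x + r • v)) (u _)]
        calc _ = ‖w (x + r • v) - w (x + s • v) + (u (x + r • v) - w (x + r • v) +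
              (w (x + s • v) - u (x + s • v)))‖ := by congr 1; abel
          _ ≤ _ := norm_add_le_of_le le_rfl (norm_add_le _ _)
    _ = ∫ v, ‖w (x + r • v) - w (x + s • v)‖ ∂μ[|closedBall 0 1] +
        (∫ v, ‖w (x + r • v) - u (x + r • v)‖ ∂μ[|closedBall 0 1] +
          ∫ v, ‖w (x + s • v) - u (x + s • v)‖ ∂μ[|closedBall 0 1]) := by
        rw [← integral_add hwu_r hwu_s]
        exact integral_add hww (hwu_r.add hwu_s)
    _ ≤ _ := by
        rw [two_mul]
        exact add_le_add_right (add_le_add (hsub hsr) (hsub le_rfl)) _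

namespace HasWeakFDerivOn

variable [CompleteSpace W] {Ω : Set V} {u : V → W} {Du : V → V →L[ℝ] W}

theorem eventually_integral_norm_dilate_mollify_sub_le (h : HasWeakFDerivOn μ Ω u Du)
    (hΩ : IsOpen Ω) (hu : Integrable u μ) (hDu : Integrable Du μ) {x : V} {s r A : ℝ} (hs : 0 < s)
    (hsr : s ≤ r) (hxr : closedBall x r ⊆ Ω)
    (hA : ∀ τ ∈ Icc s r, ⨍ w in closedBall x τ, ‖Du w‖ ∂μ ≤ A) :
    ∀ᶠ j in atTop,
      ∫ v, ‖mollify μ j u (x + r • v) - mollify μ j u (x + s • v)‖ ∂μ[|closedBall 0 1] ≤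
        (A + (μ.real (closedBall x s))⁻¹ * ∫ w, ‖mollify μ j Du w - Du w‖ ∂μ) * (r - s) := by
  filter_upwards [h.eventually_fderiv_mollify hu.locallyIntegrable hDu.locallyIntegrable
    (isCompact_closedBall x r) hΩ hxr] with j hj
  refine _root_.integral_norm_dilate_sub_le
    (ProbabilityTheory.ae_cond_mem measurableSet_closedBall)
    ((contDiff_mollify hu.locallyIntegrable j).of_le (by simp)) x hs.le hsr fun τ hτ ↦ ?_
  rw [integral_cond_closedBall_comp_add_smul (fun w ↦ ‖fderiv ℝ (mollify μ j u) w‖) x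
    (hs.trans_le hτ.1)]
  calc ⨍ w in closedBall x τ, ‖fderiv ℝ (mollify μ j u) w‖ ∂μ
      = ⨍ w in closedBall x τ, ‖mollify μ j Du w‖ ∂μ :=
        setAverage_congr_fun measurableSet_closedBall <| .of_forall fun w hw ↦ by
          rw [hj w (closedBall_subset_closedBall hτ.2 hw)]
    _ ≤ _ := (setAverage_closedBall_norm_le_add (integrable_mollify hDu j) hDu x hs hτ.1).trans
        (add_le_add_left (hA τ hτ) _)

theorem integral_norm_dilate_sub_le (h : HasWeakFDerivOn μ Ω u Du) (hΩ : IsOpen Ω)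
    (hu : Integrable u μ) (hDu : Integrable Du μ) {x : V} {s r A : ℝ} (hs : 0 < s) (hsr : s ≤ r)
    (hxr : closedBall x r ⊆ Ω)
    (hA : ∀ τ ∈ Icc s r, ⨍ w in closedBall x τ, ‖Du w‖ ∂μ ≤ A) :
    ∫ v, ‖u (x + r • v) - u (x + s • v)‖ ∂μ[|closedBall 0 1] ≤ A * (r - s) := by
  set c := (μ.real (closedBall x s))⁻¹
  have hlim : Tendsto (fun j ↦ (A + c * ∫ w, ‖mollify μ j Du w - Du w‖ ∂μ) * (r - s) +
      2 * (c * ∫ w, ‖mollify μ j u w - u w‖ ∂μ)) atTop (𝓝 (A * (r - s))) := by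
    have hu₀ := ((tendsto_integral_norm_mollify_sub hu).const_mul c).const_mul 2
    have hDu₀ := (tendsto_integral_norm_mollify_sub hDu).const_mul c
    simpa using ((hDu₀.const_add A).mul_const (r - s)).add hu₀
  refine ge_of_tendsto hlim ?_
  filter_upwards [h.eventually_integral_norm_dilate_mollify_sub_le hΩ hu hDu hs hsr hxr hA]
    with j hj
  exact (integral_norm_dilate_sub_le_add hu (integrable_mollify hu j) x hs hsr).trans
    (add_le_add_left hj _)

end HasWeakFDerivOn

end Poincare

section LusinLipschitz

open Filter Topology Module
open scoped ProbabilityTheory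

theorem exists_measurableSet_subset_measure_diff_lt {α : Type*} [MeasurableSpace α]
    {μ : Measure α} {Ω : Set α} {S : ℕ → Set α} (hΩ : NullMeasurableSet Ω μ) (hΩfin : μ Ω ≠ ∞)
    (hS : ∀ N, NullMeasurableSet (S N) μ) (hmono : Monotone S)
    (hcover : ∀ᵐ x ∂μ, x ∈ Ω → ∃ N, x ∈ S N) {ε : ℝ≥0∞} (hε : 0 < ε) :
    ∃ N, ∃ E ⊆ Ω ∩ S N, MeasurableSet E ∧ μ (Ω \ E) < ε := by
  have hlim : Tendsto (fun N ↦ μ (Ω \ S N)) atTop (𝓝 0) := by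
    have hnull : μ (⋂ N, Ω \ S N) = 0 := measure_mono_null (fun x hx ↦ by
      simp only [mem_iInter, Set.mem_sdiff, forall_and, forall_const] at hx
      simpa [hx.1] using hx.2) hcover
    rw [← hnull]
    exact tendsto_measure_iInter_atTop (fun N ↦ hΩ.diff (hS N))
      (fun M N hMN ↦ sdiff_subset_sdiff_right (hmono hMN))
      ⟨0, measure_ne_top_of_subset sdiff_subset hΩfin⟩
  obtain ⟨N, hN⟩ := (hlim.eventually_lt_const hε).exists
  obtain ⟨E, hES, hE, hEae⟩ := (hΩ.inter (hS N)).exists_measurable_subset_ae_eq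
  refine ⟨N, E, hES, hE, ?_⟩
  rwa [measure_congr ((ae_eq_refl Ω).diff hEae), sdiff_self_inter]

variable {V W X : Type*} [NormedAddCommGroup V] [MeasurableSpace V] [NormedAddCommGroup W]
  [NormedAddCommGroup X] {Ω : Set V}

/-- The set of points of `Ω` where the centred Hardy–Littlewood maximal function of `g`, restricted
to the scales at most `r`, is at most `B`; the balls involved are required to lie in `Ω`. -/
def maximalLESet (μ : Measure V) (Ω : Set V) (g : V → ℝ) (B r : ℝ) : Set V :=
  {x | closedBall x r ⊆ Ω ∧ ∀ τ ∈ Ioc 0 r, ⨍ w in closedBall x τ, g w ∂μ ≤ B}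

/-- `x` is a Lebesgue point of `u`: the mean oscillation of `u` around the value `u x` on small
balls centred at `x` tends to zero. -/
def IsLebesguePoint (μ : Measure V) (u : V → W) (x : V) : Prop :=
  Tendsto (fun τ ↦ ⨍ w in closedBall x τ, ‖u w - u x‖ ∂μ) (𝓝[>] 0) (𝓝 0)

variable {μ : Measure V}

theorem maximalLESet_mono (g : V → ℝ) {B B' r r' : ℝ} (hB : B ≤ B') (hr : r' ≤ r) :
    maximalLESet μ Ω g B r ⊆ maximalLESet μ Ω g B' r' := fun _ hx ↦
  ⟨(closedBall_subset_closedBall hr).trans hx.1, fun τ hτ ↦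
    (hx.2 τ ⟨hτ.1, hτ.2.trans hr⟩).trans hB⟩

theorem IsLebesguePoint.comp_lipschitzWith [ProperSpace V]
    [IsFiniteMeasureOnCompacts μ] {u : V → W} {x : V} (hx : IsLebesguePoint μ u x)
    (hu : LocallyIntegrable u μ) {g : W → X} {C : ℝ≥0} (hg : LipschitzWith C g) :
    IsLebesguePoint μ (g ∘ u) x := by
  have hlim := Tendsto.const_mul (C : ℝ) hx
  rw [mul_zero] at hlim
  refine squeeze_zero (fun τ ↦ integral_nonneg fun w ↦ norm_nonneg _) (fun τ ↦ ?_) hlim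
  rw [setAverage_eq, setAverage_eq, smul_eq_mul, smul_eq_mul, mul_left_comm]
  have hint : IntegrableOn (fun w ↦ ‖u w - u x‖) (closedBall x τ) μ :=
    ((hu.integrableOn_isCompact (isCompact_closedBall x τ)).sub
      (integrableOn_const measure_closedBall_lt_top.ne)).norm
  have hle := integral_mono_of_nonneg (f := fun w ↦ ‖(g ∘ u) w - (g ∘ u) x‖)
    (.of_forall fun w ↦ norm_nonneg _) (hint.const_mul (C : ℝ))
    (.of_forall fun w ↦ hg.norm_sub_le (u w) (u x))
  exact mul_le_mul_of_nonneg_left (hle.trans_eq (integral_const_mul _ _)) (by positivity)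

theorem maximalLESet_subset_of_ae_le_mul [ProperSpace V] {g g' : V → ℝ}
    (hg : LocallyIntegrable g μ) (hg' : 0 ≤ g') {K : ℝ} (hK : 0 ≤ K)
    (hle : ∀ᵐ w ∂μ, g' w ≤ K * g w) (B r : ℝ) :
    maximalLESet μ Ω g B r ⊆ maximalLESet μ Ω g' (K * B) r := fun x hx ↦ by
  refine ⟨hx.1, fun τ hτ ↦ le_trans ?_ (mul_le_mul_of_nonneg_left (hx.2 τ hτ) hK)⟩
  rw [setAverage_eq, setAverage_eq, smul_eq_mul, smul_eq_mul, mul_left_comm]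
  have hint := (hg.integrableOn_isCompact (isCompact_closedBall x τ)).const_mul K
  exact mul_le_mul_of_nonneg_left ((integral_mono_of_nonneg (.of_forall hg') hint
    (ae_restrict_of_ae hle)).trans_eq (integral_const_mul _ _)) (by positivity)

variable [NormedSpace ℝ V] [FiniteDimensional ℝ V] [BorelSpace V] [μ.IsAddHaarMeasure]

theorem setAverage_closedBall_half_le {F : V → ℝ} {x y : V} {ρ : ℝ} (hρ : 0 ≤ ρ)
    (hF : IntegrableOn F (closedBall y ρ) μ) (hF0 : 0 ≤ F) (hxy : dist x y ≤ ρ / 2) :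
    ⨍ w in closedBall x (ρ / 2), F w ∂μ ≤ 2 ^ finrank ℝ V * ⨍ w in closedBall y ρ, F w ∂μ := by
  have hsub : closedBall x (ρ / 2) ⊆ closedBall y ρ := closedBall_subset_closedBall' (by linarith)
  have hvol : (μ.real (closedBall x (ρ / 2)))⁻¹ =
      2 ^ finrank ℝ V * (μ.real (closedBall y ρ))⁻¹ := by
    rw [Measure.addHaar_real_closedBall' μ x (by positivity),
      Measure.addHaar_real_closedBall' μ y hρ, div_pow, mul_inv, mul_inv, inv_div]
    ring
  rw [setAverage_eq, setAverage_eq, smul_eq_mul, smul_eq_mul, hvol, mul_assoc]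
  have hmono := setIntegral_mono_set hF (.of_forall hF0) hsub.eventuallyLE
  gcongr

theorem closure_maximalLESet_subset {g : V → ℝ} (hg : Integrable g μ) (hg0 : 0 ≤ g) {B r : ℝ}
    (hr : 0 < r) :
    closure (maximalLESet μ Ω g B r) ⊆ maximalLESet μ Ω g (2 ^ finrank ℝ V * B) (r / 2) := by
  intro x hx
  constructor
  · obtain ⟨y, hy, hxy⟩ := Metric.mem_closure_iff.1 hx (r / 2) (by positivity)
    exact (closedBall_subset_closedBall' (by linarith)).trans hy.1
  · intro τ hτ
    obtain ⟨y, hy, hxy⟩ := Metric.mem_closure_iff.1 hx τ hτ.1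
    have hhalf := setAverage_closedBall_half_le (μ := μ) (F := g) (x := x) (y := y) (ρ := 2 * τ)
      (by linarith [hτ.1]) hg.integrableOn hg0 (by linarith)
    rw [mul_div_cancel_left₀ τ two_ne_zero] at hhalf
    exact hhalf.trans (by gcongr; exact hy.2 _ ⟨by linarith [hτ.1], by linarith [hτ.2]⟩)

theorem ae_exists_mem_maximalLESet (hΩ : IsOpen Ω) {g : V → ℝ} (hg : LocallyIntegrable g μ) :
    ∀ᵐ x ∂μ, x ∈ Ω → ∃ N : ℕ, x ∈ maximalLESet μ Ω g N (1 / (N + 1)) := by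
  filter_upwards [(Besicovitch.vitaliFamily μ).ae_tendsto_average hg] with x hx hxΩ
  have haverage := (hx.comp (Besicovitch.tendsto_filterAt μ x)).eventually_le_const
    (lt_add_one (g x))
  obtain ⟨t, ht, hts⟩ := mem_nhdsGT_iff_exists_Ioc_subset.1 haverage
  obtain ⟨ρ, hρ, hρΩ⟩ := nhds_basis_closedBall.mem_iff.1 (hΩ.mem_nhds hxΩ)
  have hinv := tendsto_one_div_add_atTop_nhds_zero_nat (𝕜 := ℝ)
  obtain ⟨N, hNρ, hNt, hNg⟩ := ((hinv.eventually_le_const hρ).and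
    ((hinv.eventually_le_const (mem_Ioi.1 ht)).and
      (tendsto_natCast_atTop_atTop.eventually_ge_atTop (g x + 1)))).exists
  exact ⟨N, (closedBall_subset_closedBall hNρ).trans hρΩ, fun τ hτ ↦
    (hts ⟨hτ.1, hτ.2.trans hNt⟩ : _ ≤ g x + 1).trans hNg⟩

theorem ae_isLebesguePoint {u : V → W} (hu : LocallyIntegrable u μ) :
    ∀ᵐ x ∂μ, IsLebesguePoint μ u x := by
  filter_upwards [(Besicovitch.vitaliFamily μ).ae_tendsto_average_norm_sub hu] with x hx
  exact hx.comp (Besicovitch.tendsto_filterAt μ x)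

theorem exists_measurableSet_isLebesguePoint_and_mem_maximalLESet (hΩ : IsOpen Ω)
    (hΩfin : μ Ω ≠ ∞) {u : V → W} (hu : Integrable u μ) {g : V → ℝ} (hg : Integrable g μ)
    (hg0 : 0 ≤ g) {ε : ℝ≥0∞} (hε : 0 < ε) :
    ∃ E ⊆ Ω, MeasurableSet E ∧ μ (Ω \ E) < ε ∧ ∃ R B r : ℝ, 0 < r ∧ ∀ x ∈ E,
      ‖u x‖ ≤ R ∧ IsLebesguePoint μ u x ∧ x ∈ maximalLESet μ Ω g B r := by
  set Q : ℕ → Set V := fun N ↦ maximalLESet μ Ω g N (1 / (N + 1))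
  have hQ : Monotone Q := fun M N hMN ↦ maximalLESet_mono g (by gcongr) (by gcongr)
  set S : ℕ → Set V := fun N ↦ closure (Q N) ∩ ({x | ‖u x‖ ≤ N} ∩ {x | IsLebesguePoint μ u x})
  have hcover : ∀ᵐ x ∂μ, x ∈ Ω → ∃ N, x ∈ S N := by
    filter_upwards [ae_exists_mem_maximalLESet hΩ hg.locallyIntegrable,
      ae_isLebesguePoint hu.locallyIntegrable] with x hxQ hxu hxΩ
    obtain ⟨M, hM⟩ := hxQ hxΩ
    obtain ⟨M', hM'⟩ := exists_nat_ge ‖u x‖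
    exact ⟨max M M', subset_closure (hQ (le_max_left _ _) hM),
      hM'.trans (by exact_mod_cast le_max_right M M'), hxu⟩
  obtain ⟨N, E, hES, hE, hEε⟩ := exists_measurableSet_subset_measure_diff_lt
    hΩ.measurableSet.nullMeasurableSet hΩfin
    (fun N ↦ isClosed_closure.nullMeasurableSet.inter
      ((nullMeasurableSet_le hu.1.norm.aemeasurable aemeasurable_const).inter
        (.of_compl (.of_null (ae_isLebesguePoint hu.locallyIntegrable)))))
    (fun M N hMN ↦ inter_subset_inter (closure_mono (hQ hMN))
      (inter_subset_inter_left _ fun x hx ↦ hx.out.trans (by exact_mod_cast hMN)))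
    hcover hε
  refine ⟨E, hES.trans inter_subset_left, hE, hEε, N, _, _, ?_, fun x hx ↦
    ⟨(hES hx).2.2.1, (hES hx).2.2.2, closure_maximalLESet_subset hg hg0 ?_ (hES hx).2.1⟩⟩ <;>
  positivity

theorem norm_sub_le_two_pow_mul_setAverage_add {u : V → W} (hu : LocallyIntegrable u μ) {x y : V}
    (hxy : x ≠ y) :
    ‖u x - u y‖ ≤ 2 ^ finrank ℝ V * (⨍ w in closedBall x (dist x y), ‖u w - u x‖ ∂μ +
      ⨍ w in closedBall y (dist x y), ‖u w - u y‖ ∂μ) := by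
  set ρ := dist x y
  have hρ : 0 < ρ := dist_pos.2 hxy
  set z := midpoint ℝ x y
  have hzx : dist z x = ρ / 2 := by
    simp [z, ρ, dist_midpoint_left, div_eq_inv_mul]
  have hzy : dist z y = ρ / 2 := by
    simp [z, ρ, dist_midpoint_right, div_eq_inv_mul]
  have hint (a b : V) (σ : ℝ) : IntegrableOn (fun w ↦ ‖u w - u a‖) (closedBall b σ) μ :=
    ((hu.integrableOn_isCompact (isCompact_closedBall b σ)).sub
      (integrableOn_const measure_closedBall_lt_top.ne)).norm
  have hne : μ (closedBall z (ρ / 2)) ≠ 0 := (measure_closedBall_pos μ z (half_pos hρ)).ne'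
  calc ‖u x - u y‖ = ⨍ _ in closedBall z (ρ / 2), ‖u x - u y‖ ∂μ :=
        (setAverage_const hne measure_closedBall_lt_top.ne _).symm
    _ ≤ ⨍ w in closedBall z (ρ / 2), (‖u w - u x‖ + ‖u w - u y‖) ∂μ := by
        simp only [setAverage_eq, smul_eq_mul]
        refine mul_le_mul_of_nonneg_left (integral_mono
          (integrableOn_const measure_closedBall_lt_top.ne)
          ((hint x z _).add (hint y z _)) fun w ↦ ?_) (by positivity)
        simpa only [norm_sub_rev (u w) (u x)] using norm_sub_le_norm_sub_add_norm_sub _ _ _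
    _ = ⨍ w in closedBall z (ρ / 2), ‖u w - u x‖ ∂μ +
          ⨍ w in closedBall z (ρ / 2), ‖u w - u y‖ ∂μ := by
        simp only [setAverage_eq]
        rw [integral_add (hint x z _) (hint y z _), smul_add]
    _ ≤ _ := by
        rw [mul_add]
        exact add_le_add
          (setAverage_closedBall_half_le hρ.le (hint x x ρ) (fun w ↦ norm_nonneg _) hzx.le)
          (setAverage_closedBall_half_le hρ.le (hint y y ρ) (fun w ↦ norm_nonneg _) hzy.le)

variable [NormedSpace ℝ W] [CompleteSpace W] {u : V → W} {Du : V → V →L[ℝ] W}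

namespace HasWeakFDerivOn

theorem setAverage_norm_sub_le (h : HasWeakFDerivOn μ Ω u Du) (hΩ : IsOpen Ω)
    (hu : Integrable u μ) (hDu : Integrable Du μ) {x : V} (hx : IsLebesguePoint μ u x) {B r : ℝ}
    (hxB : x ∈ maximalLESet μ Ω (fun w ↦ ‖Du w‖) B r) {τ : ℝ} (hτ : τ ∈ Ioc 0 r) :
    ⨍ w in closedBall x τ, ‖u w - u x‖ ∂μ ≤ B * τ := by
  have hlim : Tendsto (fun s ↦ B * (τ - s) + ⨍ w in closedBall x s, ‖u w - u x‖ ∂μ) (𝓝[>] 0)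
      (𝓝 (B * τ)) := by
    have hB : Tendsto (fun s ↦ B * (τ - s)) (𝓝[>] 0) (𝓝 (B * (τ - 0))) :=
      tendsto_nhdsWithin_of_tendsto_nhds (Continuous.tendsto (by fun_prop) 0)
    simpa using hB.add hx
  refine ge_of_tendsto hlim ?_
  filter_upwards [Ioc_mem_nhdsGT hτ.1] with s hs
  have hdil := h.integral_norm_dilate_sub_le hΩ hu hDu hs.1 hs.2
    ((closedBall_subset_closedBall hτ.2).trans hxB.1)
    fun σ hσ ↦ hxB.2 σ ⟨hs.1.trans_le hσ.1, hσ.2.trans hτ.2⟩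
  have hint {σ : ℝ} (hσ : 0 < σ) := integrable_cond_closedBall_comp_add_smul hu x hσ
  simp only [← integral_cond_closedBall_comp_add_smul (fun w ↦ ‖u w - u x‖) x hτ.1,
    ← integral_cond_closedBall_comp_add_smul (fun w ↦ ‖u w - u x‖) x hs.1]
  have hint₁ := ((hint hτ.1).sub (hint hs.1)).norm
  have hint₂ := ((hint hs.1).sub (integrable_const (u x))).norm
  calc ∫ v, ‖u (x + τ • v) - u x‖ ∂μ[|closedBall 0 1]
      ≤ ∫ v, (‖u (x + τ • v) - u (x + s • v)‖ + ‖u (x + s • v) - u x‖) ∂μ[|closedBall 0 1] :=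
        integral_mono ((hint hτ.1).sub (integrable_const (u x))).norm (hint₁.add hint₂)
          fun v ↦ norm_sub_le_norm_sub_add_norm_sub _ _ _
    _ = ∫ v, ‖u (x + τ • v) - u (x + s • v)‖ ∂μ[|closedBall 0 1] +
          ∫ v, ‖u (x + s • v) - u x‖ ∂μ[|closedBall 0 1] := integral_add hint₁ hint₂
    _ ≤ _ := by gcongr

theorem norm_sub_le_mul_dist (h : HasWeakFDerivOn μ Ω u Du) (hΩ : IsOpen Ω) (hu : Integrable u μ)
    (hDu : Integrable Du μ) {B r : ℝ} {x y : V} (hx : IsLebesguePoint μ u x)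
    (hxB : x ∈ maximalLESet μ Ω (fun w ↦ ‖Du w‖) B r) (hy : IsLebesguePoint μ u y)
    (hyB : y ∈ maximalLESet μ Ω (fun w ↦ ‖Du w‖) B r) (hxy : dist x y ≤ r) :
    ‖u x - u y‖ ≤ 2 ^ (finrank ℝ V + 1) * B * dist x y := by
  rcases eq_or_ne x y with rfl | hne
  · simp
  have hmem : dist x y ∈ Ioc 0 r := ⟨dist_pos.2 hne, hxy⟩
  calc ‖u x - u y‖ ≤ 2 ^ finrank ℝ V * (⨍ w in closedBall x (dist x y), ‖u w - u x‖ ∂μ +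
        ⨍ w in closedBall y (dist x y), ‖u w - u y‖ ∂μ) :=
        norm_sub_le_two_pow_mul_setAverage_add hu.locallyIntegrable hne
    _ ≤ 2 ^ finrank ℝ V * (B * dist x y + B * dist x y) := by
        gcongr
        · exact h.setAverage_norm_sub_le hΩ hu hDu hx hxB hmem
        · exact h.setAverage_norm_sub_le hΩ hu hDu hy hyB hmem
    _ = 2 ^ (finrank ℝ V + 1) * B * dist x y := by ring

theorem norm_comp_sub_le_mul_dist [NormedSpace ℝ X] [CompleteSpace X] (h : HasWeakFDerivOn μ Ω u Du)
    (hΩ : IsOpen Ω) (hu : Integrable u μ) (hDu : Integrable Du μ) {g : W → X} {C : ℝ≥0}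
    (hg : ContDiff ℝ 1 g) (hgC : LipschitzWith C g) {K : ℝ} (hK : 0 ≤ K)
    (hgK : ∀ᵐ w ∂μ, ‖(fderiv ℝ g (u w)).comp (Du w)‖ ≤ K * ‖Du w‖) {B r : ℝ} {x y : V}
    (hx : IsLebesguePoint μ u x) (hxB : x ∈ maximalLESet μ Ω (fun w ↦ ‖Du w‖) B r)
    (hy : IsLebesguePoint μ u y) (hyB : y ∈ maximalLESet μ Ω (fun w ↦ ‖Du w‖) B r)
    (hxy : dist x y ≤ r) :
    ‖g (u x) - g (u y)‖ ≤ 2 ^ (finrank ℝ V + 1) * (K * B) * dist x y := by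
  set g₀ : W → X := fun w ↦ g w - g 0
  have hg₀C : LipschitzWith C g₀ := fun a b ↦ by simpa [g₀] using hgC a b
  have hg₀ : ContDiff ℝ 1 g₀ := hg.sub contDiff_const
  have hg₀0 : g₀ 0 = 0 := sub_self _
  have hfderiv (w : W) : fderiv ℝ g₀ w = fderiv ℝ g w := fderiv_sub_const (g 0)
  have hsub : maximalLESet μ Ω (fun w ↦ ‖Du w‖) B r ⊆
      maximalLESet μ Ω (fun w ↦ ‖(fderiv ℝ g₀ (u w)).comp (Du w)‖) (K * B) r :=
    maximalLESet_subset_of_ae_le_mul hDu.norm.locallyIntegrable (fun w ↦ norm_nonneg _) hK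
      (by simpa only [hfderiv] using hgK) B r
  simpa [g₀] using (h.comp hΩ hu hDu hg₀ hg₀C hg₀0).norm_sub_le_mul_dist hΩ
    (integrable_comp_of_lipschitzWith hg₀C hg₀0 hu)
    (integrable_fderiv_comp_clm hg₀ hg₀C hu.1 hDu)
    (hx.comp_lipschitzWith hu.locallyIntegrable hg₀C) (hsub hxB)
    (hy.comp_lipschitzWith hu.locallyIntegrable hg₀C) (hsub hyB) hxy

end HasWeakFDerivOn

end LusinLipschitz

section Gauge

open Filter Topology

variable {E H : Type*} [NormedAddCommGroup E] [NormedSpace ℝ E] [NormedAddCommGroup H]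
  [InnerProductSpace ℝ H]

/-- The homogeneous gauge with horizontal part `P` and vertical part `α`, regularized by `δ`.
It is smooth for `0 < δ`, while `δ = 0` gives the Korányi gauge. -/
noncomputable def koranyiGauge (P : E →L[ℝ] H) (α : E →L[ℝ] ℝ) (δ : ℝ) (w : E) : ℝ :=
  (‖P w‖ ^ 4 + α w ^ 2 + δ) ^ (1 / 4 : ℝ)

variable (P : E →L[ℝ] H) (α : E →L[ℝ] ℝ) {δ : ℝ}

theorem koranyiGauge_nonneg (hδ : 0 ≤ δ) (w : E) : 0 ≤ koranyiGauge P α δ w := by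
  unfold koranyiGauge
  positivity

theorem koranyiGauge_pos (hδ : 0 < δ) (w : E) : 0 < koranyiGauge P α δ w := by
  unfold koranyiGauge
  positivity

theorem koranyiGauge_pow_four (hδ : 0 ≤ δ) (w : E) :
    koranyiGauge P α δ w ^ 4 = ‖P w‖ ^ 4 + α w ^ 2 + δ := by
  rw [koranyiGauge, ← Real.rpow_natCast, ← Real.rpow_mul (by positivity)]
  norm_num

theorem norm_le_koranyiGauge (hδ : 0 ≤ δ) (w : E) : ‖P w‖ ≤ koranyiGauge P α δ w := by
  refine le_of_pow_le_pow_left₀ four_ne_zero (koranyiGauge_nonneg P α hδ w) ?_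
  rw [koranyiGauge_pow_four P α hδ]
  linarith [sq_nonneg (α w)]

theorem abs_le_koranyiGauge_sq (hδ : 0 ≤ δ) (w : E) : |α w| ≤ koranyiGauge P α δ w ^ 2 := by
  refine abs_le_of_sq_le_sq ?_ (sq_nonneg _)
  rw [← pow_mul, koranyiGauge_pow_four P α hδ]
  linarith [pow_nonneg (norm_nonneg (P w)) 4]

theorem rpow_le_koranyiGauge (hδ : 0 ≤ δ) (w : E) :
    δ ^ (1 / 4 : ℝ) ≤ koranyiGauge P α δ w :=
  Real.rpow_le_rpow hδ (le_add_of_nonneg_left (by positivity)) (by norm_num)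

theorem contDiff_koranyiGauge (hδ : 0 < δ) {m : WithTop ℕ∞} :
    ContDiff ℝ m (koranyiGauge P α δ) := by
  have hnorm (w : E) : ‖P w‖ ^ 4 = (‖P w‖ ^ 2) ^ 2 := by ring
  simp only [funext_iff.2 fun w ↦ koranyiGauge.eq_def P α δ w, hnorm]
  exact ContDiff.rpow_const_of_ne
    ((((P.contDiff.norm_sq ℝ).pow 2).add (α.contDiff.pow 2)).add contDiff_const)
    fun w ↦ by positivity

theorem four_mul_koranyiGauge_pow_mul_fderiv (hδ : 0 < δ) (w v : E) :
    4 * koranyiGauge P α δ w ^ 3 * fderiv ℝ (koranyiGauge P α δ) w v =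
      4 * ‖P w‖ ^ 2 * inner ℝ (P w) (P v) + 2 * α w * α v := by
  have hN := ((contDiff_koranyiGauge P α hδ).differentiable one_ne_zero w).hasFDerivAt
  have hpow := ((P.hasFDerivAt (x := w)).norm_sq.pow 2).add ((α.hasFDerivAt (x := w)).pow 2)
    |>.add_const δ
  have huniq := (hN.pow 4).unique (hpow.congr_of_eventuallyEq (.of_forall fun y ↦ by
    simp only [Pi.add_apply, koranyiGauge_pow_four P α hδ.le y]
    ring))
  have happly : 4 * koranyiGauge P α δ w ^ 3 * fderiv ℝ (koranyiGauge P α δ) w v =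
      2 * ‖P w‖ ^ 2 * (2 * inner ℝ (P w) (P v)) + 2 * α w * α v := by
    simpa using congr($huniq v)
  linarith

theorem abs_fderiv_koranyiGauge_le (hδ : 0 < δ) (w v : E) :
    |fderiv ℝ (koranyiGauge P α δ) w v| ≤ ‖P v‖ + |α v| / (2 * koranyiGauge P α δ w) := by
  have hN := koranyiGauge_pos P α hδ w
  have hP := norm_le_koranyiGauge P α hδ.le w
  have hα := abs_le_koranyiGauge_sq P α hδ.le w
  have hderiv := four_mul_koranyiGauge_pow_mul_fderiv P α hδ w v
  set N := koranyiGauge P α δ w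
  set d := fderiv ℝ (koranyiGauge P α δ) w v
  refine le_of_mul_le_mul_left (a := 4 * N ^ 3) ?_ (by positivity)
  calc 4 * N ^ 3 * |d| = |4 * ‖P w‖ ^ 2 * inner ℝ (P w) (P v) + 2 * α w * α v| := by
        rw [← hderiv, abs_mul, abs_of_pos (show 0 < 4 * N ^ 3 by positivity)]
    _ ≤ |4 * ‖P w‖ ^ 2 * inner ℝ (P w) (P v)| + |2 * α w * α v| := abs_add_le _ _
    _ = 4 * ‖P w‖ ^ 2 * |inner ℝ (P w) (P v)| + 2 * |α w| * |α v| := by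
        simp [abs_mul]
    _ ≤ 4 * N ^ 2 * (N * ‖P v‖) + 2 * N ^ 2 * |α v| := by
        gcongr
        exact (abs_real_inner_le_norm _ _).trans (by gcongr)
    _ = 4 * N ^ 3 * (‖P v‖ + |α v| / (2 * N)) := by
        field_simp
        ring

theorem exists_lipschitzWith_koranyiGauge (hδ : 0 < δ) :
    ∃ C, LipschitzWith C (koranyiGauge P α δ) := by
  refine ⟨⟨‖P‖ + ‖α‖ / (2 * δ ^ (1 / 4 : ℝ)), by positivity⟩, lipschitzWith_of_nnnorm_fderiv_le
    ((contDiff_koranyiGauge P α hδ).differentiable one_ne_zero) fun w ↦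
      ContinuousLinearMap.opNorm_le_bound _ (by positivity) fun v ↦ ?_⟩
  calc ‖fderiv ℝ (koranyiGauge P α δ) w v‖ ≤ ‖P v‖ + |α v| / (2 * koranyiGauge P α δ w) :=
        abs_fderiv_koranyiGauge_le P α hδ w v
    _ ≤ ‖P‖ * ‖v‖ + ‖α‖ * ‖v‖ / (2 * δ ^ (1 / 4 : ℝ)) := by
        gcongr
        · exact P.le_opNorm v
        · exact α.le_opNorm v
        · exact rpow_le_koranyiGauge P α hδ.le w
    _ = (‖P‖ + ‖α‖ / (2 * δ ^ (1 / 4 : ℝ))) * ‖v‖ := by ring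

theorem tendsto_koranyiGauge (w : E) :
    Tendsto (fun δ ↦ koranyiGauge P α δ w) (𝓝[>] 0) (𝓝 (koranyiGauge P α 0 w)) :=
  tendsto_nhdsWithin_of_tendsto_nhds <| Continuous.tendsto
    ((continuous_const.add continuous_id).rpow_const fun _ ↦ .inr (by norm_num)) 0

end Gauge

section Koranyi

open Filter Topology

variable {n : ℕ}

theorem norm_sq_piH (p : Heis n) :
    ‖piH n p‖ ^ 2 = ∑ j : Fin n, (p (xIdx n j) ^ 2 + p (yIdx n j) ^ 2) := by
  rw [EuclideanSpace.real_norm_sq_eq,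
    ← (finProdFinEquiv.trans (finCongr (mul_comm n 2))).sum_comp, Fintype.sum_prod_type]
  refine Finset.sum_congr rfl fun j _ ↦ ?_
  rw [Fin.sum_univ_two]
  have hx : finCongr (mul_comm n 2) (finProdFinEquiv (j, 0)) = xIdx2 n j := by
    simp [xIdx2, Fin.ext_iff]
  have hy : finCongr (mul_comm n 2) (finProdFinEquiv (j, 1)) = yIdx2 n j := by
    simp [yIdx2, Fin.ext_iff, add_comm]
  rw [Equiv.trans_apply, Equiv.trans_apply, hx, hy]
  rfl

theorem norm_piH_le (p : Heis n) : ‖piH n p‖ ≤ ‖p‖ := by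
  refine le_of_sq_le_sq ?_ (norm_nonneg p)
  rw [EuclideanSpace.real_norm_sq_eq p, Fin.sum_univ_castSucc, EuclideanSpace.real_norm_sq_eq]
  exact le_add_of_nonneg_right (sq_nonneg _)

theorem abs_omegaF_piH_le (p q : Heis n) :
    |omegaF n (piH n p) (piH n q)| ≤ ‖piH n p‖ * ‖piH n q‖ := by
  rw [← Real.sqrt_sq (norm_nonneg (piH n p)), ← Real.sqrt_sq (norm_nonneg (piH n q)),
    norm_sq_piH, norm_sq_piH]
  refine (Finset.abs_sum_le_sum_abs _ _).trans (le_trans (Finset.sum_le_sum fun j _ ↦ ?_)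
    (Real.sum_sqrt_mul_sqrt_le _ (fun j ↦ by positivity) (fun j ↦ by positivity)))
  rw [← Real.sqrt_mul (by positivity)]
  refine Real.abs_le_sqrt ?_
  change (p (xIdx n j) * q (yIdx n j) - p (yIdx n j) * q (xIdx n j)) ^ 2 ≤ _
  nlinarith [sq_nonneg (p (xIdx n j) * q (xIdx n j) + p (yIdx n j) * q (yIdx n j))]

/-- The projection `piH n` as a continuous linear map. -/
noncomputable def piHCLM (n : ℕ) : Heis n →L[ℝ] Horiz n :=
  LinearMap.toContinuousLinearMap
    { toFun := piH n
      map_add' := fun _ _ ↦ rfl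
      map_smul' := fun _ _ ↦ rfl }

/-- The value at `p` of the standard contact form `dt + 2 ∑ (x_j dy_j - y_j dx_j)`. -/
noncomputable def contactForm (p : Heis n) : Heis n →L[ℝ] ℝ :=
  EuclideanSpace.proj (tIdx n) + (2 : ℝ) • ∑ j : Fin n,
    (p (xIdx n j) • EuclideanSpace.proj (yIdx n j) - p (yIdx n j) • EuclideanSpace.proj (xIdx n j))

theorem contactForm_apply (p v : Heis n) : contactForm p v = v (tIdx n) +
    2 * ∑ j : Fin n, (p (xIdx n j) * v (yIdx n j) - p (yIdx n j) * v (xIdx n j)) := by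
  simp [contactForm]

theorem mem_kerAlpha_iff {p v : Heis n} : v ∈ kerAlpha n p ↔ contactForm p v = 0 := by
  rw [contactForm_apply]
  rfl

theorem contactForm_sub_contactForm (p q v : Heis n) :
    contactForm p v - contactForm q v = 2 * omegaF n (piH n (p - q)) (piH n v) := by
  rw [contactForm_apply, contactForm_apply, add_sub_add_left_eq_sub, ← mul_sub,
    ← Finset.sum_sub_distrib, omegaF]
  congr 1
  refine Finset.sum_congr rfl fun j _ ↦ ?_
  change _ = (p - q) (xIdx n j) * v (yIdx n j) - (p - q) (yIdx n j) * v (xIdx n j)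
  simp only [PiLp.sub_apply]
  ring

theorem dK_eq_koranyiGauge (p q : Heis n) :
    dK n q p = koranyiGauge (piHCLM n) (contactForm p) 0 (q - p) := by
  have hnorm : ‖piHCLM n (q - p)‖ ^ 4 = (‖piH n (q - p)‖ ^ 2) ^ 2 := by
    rw [← pow_mul]
    rfl
  have hform : contactForm p (q - p) = q (tIdx n) - p (tIdx n) +
      2 * ∑ j : Fin n, (p (xIdx n j) * q (yIdx n j) - q (xIdx n j) * p (yIdx n j)) := by
    simp only [contactForm_apply, PiLp.sub_apply]
    congr 2
    exact Finset.sum_congr rfl fun j _ ↦ by ring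
  rw [dK, koranyiGauge, hnorm, norm_sq_piH, hform, add_zero]
  rfl

theorem abs_contactForm_le_of_mem_kerAlpha {p q v : Heis n} (hv : v ∈ kerAlpha n q) :
    |contactForm p v| ≤ 2 * (‖piH n (q - p)‖ * ‖piH n v‖) := by
  have hsub := contactForm_sub_contactForm q p v
  rw [mem_kerAlpha_iff.1 hv, zero_sub, neg_eq_iff_eq_neg] at hsub
  rw [hsub, abs_neg, abs_mul, abs_two]
  gcongr
  exact abs_omegaF_piH_le (q - p) v

theorem norm_fderiv_koranyiGauge_comp_le {V : Type*} [NormedAddCommGroup V] [NormedSpace ℝ V]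
    {δ : ℝ} (hδ : 0 < δ) (p q : Heis n) {A : V →L[ℝ] Heis n} (hA : ∀ v, A v ∈ kerAlpha n q) :
    ‖(fderiv ℝ (koranyiGauge (piHCLM n) (contactForm p) δ) (q - p)).comp A‖ ≤ 2 * ‖A‖ := by
  refine ContinuousLinearMap.opNorm_le_bound _ (by positivity) fun v ↦ ?_
  have hpos := koranyiGauge_pos (piHCLM n) (contactForm p) hδ (q - p)
  calc |fderiv ℝ (koranyiGauge (piHCLM n) (contactForm p) δ) (q - p) (A v)|
      ≤ ‖piH n (A v)‖ +
        |contactForm p (A v)| / (2 * koranyiGauge (piHCLM n) (contactForm p) δ (q - p)) :=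
        abs_fderiv_koranyiGauge_le _ _ hδ _ _
    _ ≤ ‖piH n (A v)‖ + ‖piH n (A v)‖ := by
        gcongr
        rw [div_le_iff₀' (by positivity), mul_assoc]
        refine (abs_contactForm_le_of_mem_kerAlpha (hA v)).trans ?_
        gcongr
        exact norm_le_koranyiGauge (piHCLM n) (contactForm p) hδ.le (q - p)
    _ ≤ 2 * ‖A‖ * ‖v‖ := by
        linarith [norm_piH_le (A v), A.le_opNorm v]

theorem dK_self (p : Heis n) : dK n p p = 0 := by
  simp [dK_eq_koranyiGauge, koranyiGauge]

theorem dK_nonneg (p q : Heis n) : 0 ≤ dK n p q := by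
  rw [dK_eq_koranyiGauge]
  exact koranyiGauge_nonneg _ _ le_rfl _

theorem continuous_dK (n : ℕ) : Continuous fun z : Heis n × Heis n ↦ dK n z.1 z.2 := by
  unfold dK
  exact Continuous.rpow_const (by fun_prop) fun _ ↦ .inr (by norm_num)

theorem exists_dK_le (n : ℕ) (R : ℝ) :
    ∃ M, 0 ≤ M ∧ ∀ p q : Heis n, ‖p‖ ≤ R → ‖q‖ ≤ R → dK n p q ≤ M := by
  obtain ⟨M, hM⟩ := ((isCompact_closedBall (0 : Heis n) R).prod
    (isCompact_closedBall (0 : Heis n) R)).exists_bound_of_continuousOn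
      (continuous_dK n).continuousOn
  refine ⟨max M 0, le_max_right _ _, fun p q hp hq ↦ le_max_of_le_left ?_⟩
  exact (le_abs_self _).trans (hM (p, q) (by simp [hp, hq]))

end Koranyi

section WeakContact

open Filter Topology Module

theorem dK_lipschitz_of_le_mul_dist_of_dist_le {α : Type*} [PseudoMetricSpace α] {n : ℕ}
    {f : α → Heis n} {E : Set α} {R r L : ℝ} (hr : 0 < r) (hR : ∀ x ∈ E, ‖f x‖ ≤ R)
    (hL : ∀ x ∈ E, ∀ y ∈ E, dist x y ≤ r → dK n (f x) (f y) ≤ L * dist x y) :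
    ∃ L', 0 ≤ L' ∧ ∀ x ∈ E, ∀ y ∈ E, dK n (f x) (f y) ≤ L' * dist x y := by
  obtain ⟨M, hM0, hM⟩ := exists_dK_le n R
  refine ⟨max L (M / r), le_max_of_le_right (by positivity), fun x hx y hy ↦ ?_⟩
  rcases le_or_gt (dist x y) r with hxy | hxy
  · exact (hL x hx y hy hxy).trans (by gcongr; exact le_max_left _ _)
  · calc dK n (f x) (f y) ≤ M := hM _ _ (hR x hx) (hR y hy)
      _ = M / r * r := by field_simp
      _ ≤ max L (M / r) * dist x y := by
        gcongr
        exact le_max_right _ _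

variable {V : Type*} [NormedAddCommGroup V] [NormedSpace ℝ V] [FiniteDimensional ℝ V]
  [MeasurableSpace V] [BorelSpace V] {μ : Measure V} [μ.IsAddHaarMeasure] {n : ℕ} {Ω : Set V}
  {f : V → Heis n} {Df : V → V →L[ℝ] Heis n}

theorem HasWeakFDerivOn.dK_le_mul_dist (h : HasWeakFDerivOn μ Ω f Df) (hΩ : IsOpen Ω)
    (hf : Integrable f μ) (hDf : Integrable Df μ)
    (hcontact : ∀ᵐ x ∂μ, ∀ v, Df x v ∈ kerAlpha n (f x)) {B r : ℝ} {x y : V}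
    (hx : IsLebesguePoint μ f x) (hxB : x ∈ maximalLESet μ Ω (fun w ↦ ‖Df w‖) B r)
    (hy : IsLebesguePoint μ f y) (hyB : y ∈ maximalLESet μ Ω (fun w ↦ ‖Df w‖) B r)
    (hxy : dist x y ≤ r) :
    dK n (f x) (f y) ≤ 2 ^ (finrank ℝ V + 1) * (2 * B) * dist x y := by
  set N : ℝ → Heis n → ℝ := koranyiGauge (piHCLM n) (contactForm (f y))
  have hreg : ∀ δ > 0,
      |N δ (f x - f y) - N δ (f y - f y)| ≤ 2 ^ (finrank ℝ V + 1) * (2 * B) * dist x y := by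
    intro δ hδ
    obtain ⟨C, hC⟩ := exists_lipschitzWith_koranyiGauge (piHCLM n) (contactForm (f y)) hδ
    refine h.norm_comp_sub_le_mul_dist hΩ hf hDf (g := fun p ↦ N δ (p - f y))
      ((contDiff_koranyiGauge _ _ hδ).comp (contDiff_id.sub contDiff_const))
      (fun p q ↦ by simpa using hC (p - f y) (q - f y)) zero_le_two ?_ hx hxB hy hyB hxy
    filter_upwards [hcontact] with w hw
    rw [fderiv_comp_sub]
    exact norm_fderiv_koranyiGauge_comp_le hδ (f y) (f w) hw
  have hlim : Tendsto (fun δ ↦ |N δ (f x - f y) - N δ (f y - f y)|) (𝓝[>] 0)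
      (𝓝 |dK n (f x) (f y) - dK n (f y) (f y)|) := by
    rw [dK_eq_koranyiGauge, dK_eq_koranyiGauge]
    exact ((tendsto_koranyiGauge _ _ _).sub (tendsto_koranyiGauge _ _ _)).abs
  have hle := le_of_tendsto hlim (eventually_mem_nhdsWithin.mono hreg)
  rwa [dK_self, sub_zero, abs_of_nonneg (dK_nonneg _ _)] at hle

theorem lipschitz_on_large_set_of_weak_contact_general (hΩ : IsOpen Ω) (hΩfin : μ Ω ≠ ∞)
    (hf : IntegrableOn f Ω μ) (hDf : IntegrableOn Df Ω μ) (hweak : HasWeakFDerivOn μ Ω f Df)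
    (hcontact : ∀ᵐ x ∂μ, x ∈ Ω → ∀ v, Df x v ∈ kerAlpha n (f x)) {ε : ℝ≥0∞} (hε : 0 < ε) :
    ∃ E ⊆ Ω, MeasurableSet E ∧ μ (Ω \ E) < ε ∧
      ∃ L : ℝ, 0 ≤ L ∧ ∀ x ∈ E, ∀ y ∈ E, dK n (f x) (f y) ≤ L * dist x y := by
  have hF := hf.integrable_indicator hΩ.measurableSet
  have hDF : Integrable (Ω.indicator Df) μ :=
    (integrable_indicator_iff (ε' := V →L[ℝ] Heis n) hΩ.measurableSet).2 hDf
  have hcontactF : ∀ᵐ x ∂μ, ∀ v, Ω.indicator Df x v ∈ kerAlpha n (Ω.indicator f x) := by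
    filter_upwards [hcontact] with x hx v
    by_cases hxΩ : x ∈ Ω
    · simpa [hxΩ] using hx hxΩ v
    · simp [hxΩ, mem_kerAlpha_iff]
  obtain ⟨E, hEΩ, hE, hEε, R, B, r, hr, hgood⟩ :=
    exists_measurableSet_isLebesguePoint_and_mem_maximalLESet hΩ hΩfin hF hDF.norm
      (fun x ↦ norm_nonneg _) hε
  refine ⟨E, hEΩ, hE, hEε, ?_⟩
  obtain ⟨L, hL0, hL⟩ := dK_lipschitz_of_le_mul_dist_of_dist_le hr (fun x hx ↦ (hgood x hx).1)
    fun x hx y hy hxy ↦ hweak.indicator.dK_le_mul_dist hΩ hF hDF hcontactF (hgood x hx).2.1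
      (hgood x hx).2.2 (hgood y hy).2.1 (hgood y hy).2.2 hxy
  refine ⟨L, hL0, fun x hx y hy ↦ ?_⟩
  simpa only [indicator_of_mem (hEΩ hx), indicator_of_mem (hEΩ hy)] using hL x hx y hy

end WeakContact

/-- If `Ω ⊆ ℝ^k` is a bounded convex open set and
`f ∈ W^{1,1}(Ω; ℝ^{2n+1})` (with integrable weak derivative `Df`) satisfies the weak
contact equation, then for every `ε > 0` there is a measurable `E_ε ⊆ Ω` with
`|Ω \ E_ε| < ε` on which `f` is Lipschitz into `(ℝ^{2n+1}, d_K)`. -/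
theorem lipschitz_on_large_set_of_weak_contact (n k : ℕ) (hn : 0 < n) (hk : 0 < k)
    (Ω : Set (EuclideanSpace ℝ (Fin k))) (hΩ : IsOpen Ω)
    (hconv : Convex ℝ Ω) (hbdd : Bornology.IsBounded Ω)
    (f : EuclideanSpace ℝ (Fin k) → Heis n)
    (Df : EuclideanSpace ℝ (Fin k) → (EuclideanSpace ℝ (Fin k) →L[ℝ] Heis n))
    (hf : IntegrableOn f Ω)
    (hDf : IntegrableOn Df Ω)
    (hweak : IsWeakFDerivOn Ω f Df)
    (hcontact : ∀ᵐ x, x ∈ Ω → ∀ v, Df x v ∈ kerAlpha n (f x)) :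
    ∀ ε : ℝ, 0 < ε → ∃ Eε : Set (EuclideanSpace ℝ (Fin k)),
      Eε ⊆ Ω ∧ MeasurableSet Eε ∧ volume (Ω \ Eε) < ENNReal.ofReal ε ∧
      LipschitzOnK n f Eε := by
  intro ε hε
  exact lipschitz_on_large_set_of_weak_contact_general hΩ hbdd.measure_lt_top.ne hf hDf
    (hweak.hasWeakFDerivOn hf hDf) hcontact (ENNReal.ofReal_pos.2 hε)
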